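/- For every complex number q with |q| < 1, the sum over all nonnegative integers j of q^(2j^2) · (q; q^2)_j · (-q^(2j+1); q)_∞ / ((q^2; q^2)_j) equals the product over all positive integers j of (1 − q^(3j))(1 − q^(6j−3))/(1 − q^j). -/

import Mathlib

/-- The finite q-Pochhammer symbol `(a; q)_n = ∏_{h=0}^{n-1} (1 - a q^h)`. -/
noncomputable def qPoch (a q : ℂ) (n : ℕ) : ℂ := ∏ h ∈ Finset.range n, (1 - a * q ^ h)

/-- The infinite q-Pochhammer symbol `(a; q)_∞ = ∏_{h=0}^{∞} (1 - a q^h)`. -/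
noncomputable def qPochInf (a q : ℂ) : ℂ := ∏' h : ℕ, (1 - a * q ^ h)

/-! Slater's method. The finite form of the Jacobi triple product says that
`α_r = (-z)^r q^{r²}` and `β_n = (zq; q²)_n (q/z; q²)_n / (q²; q²)_{2n}` form a Bailey pair in the
base `q²`. Letting `n → ∞` in this pair gives the triple product itself, while the weak form of
Bailey's lemma turns `∑ q^{2n²} β_n` into `∑ (-z)^r q^{3r²} / (q²; q²)_∞`, which is again a triple
product, with `q³` in place of `q`. The identity is the case `z = 1`. -/

open Finset Filter Topology

section FiniteProducts

lemma qPoch_zero (a q : ℂ) : qPoch a q 0 = 1 := prod_range_zero _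

lemma qPoch_succ (a q : ℂ) (n : ℕ) : qPoch a q (n + 1) = qPoch a q n * (1 - a * q ^ n) :=
  prod_range_succ _ n

lemma qPoch_self_succ (q : ℂ) (n : ℕ) :
    qPoch q q (n + 1) = qPoch q q n * (1 - q ^ (n + 1)) := by
  rw [qPoch_succ, pow_succ']

lemma qPoch_sq_two_mul (q : ℂ) (n : ℕ) :
    qPoch (q ^ 2) (q ^ 2) (2 * n) =
      qPoch q (q ^ 2) n * qPoch (q ^ 2) (q ^ 2) n * qPoch (-q) q (2 * n) := by
  induction n with
  | zero => simp [qPoch_zero]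
  | succ n ih =>
    simp only [mul_add_one, qPoch_succ, ih]
    ring

lemma one_sub_pow_succ_ne_zero {R : Type*} [Ring R] {q : R} (hq : ¬IsOfFinOrder q) (n : ℕ) :
    1 - q ^ (n + 1) ≠ 0 :=
  fun h ↦ hq (isOfFinOrder_iff_pow_eq_one.mpr ⟨n + 1, n.succ_pos, (sub_eq_zero.mp h).symm⟩)

lemma qPoch_self_ne_zero {q : ℂ} (hq : ¬IsOfFinOrder q) (n : ℕ) : qPoch q q n ≠ 0 :=
  prod_ne_zero_iff.mpr fun h _ ↦ by simpa only [pow_succ'] using one_sub_pow_succ_ne_zero hq h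

end FiniteProducts

section FiniteSums

lemma one_sub_pow_mul_sum_antidiagonal {q : ℂ} (hq : ¬IsOfFinOrder q) (f : ℕ → ℂ) (N : ℕ) :
    (1 - q ^ (N + 1)) *
        ∑ p ∈ antidiagonal (N + 1), f p.1 / (qPoch q q p.1 * qPoch q q p.2) =
      ∑ p ∈ antidiagonal N,
        (f (p.1 + 1) + q ^ p.1 * f p.1) / (qPoch q q p.1 * qPoch q q p.2) := by
  have split : ∀ p ∈ antidiagonal (N + 1),
      (1 - q ^ (N + 1)) * (f p.1 / (qPoch q q p.1 * qPoch q q p.2)) =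
        (1 - q ^ p.1) * (f p.1 / (qPoch q q p.1 * qPoch q q p.2)) +
          q ^ p.1 * (1 - q ^ p.2) * (f p.1 / (qPoch q q p.1 * qPoch q q p.2)) := by
    intro p hp
    rw [← mem_antidiagonal.mp hp, pow_add]
    ring
  rw [mul_sum, sum_congr rfl split, sum_add_distrib, Nat.sum_antidiagonal_succ,
    Nat.sum_antidiagonal_succ']
  simp only [pow_zero, sub_self, zero_mul, mul_zero, zero_add]
  rw [← sum_add_distrib]
  refine sum_congr rfl fun p _ ↦ ?_
  have h₁ := one_sub_pow_succ_ne_zero hq p.1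
  have h₂ := one_sub_pow_succ_ne_zero hq p.2
  rw [qPoch_self_succ, qPoch_self_succ]
  field_simp

theorem sum_antidiagonal_qVandermonde {q : ℂ} (hq : ¬IsOfFinOrder q) (N c : ℕ) :
    ∑ p ∈ antidiagonal N,
        q ^ (p.1 * (p.1 + c)) / qPoch q q (p.1 + c) / (qPoch q q p.1 * qPoch q q p.2) =
      (qPoch q q N * qPoch q q (N + c))⁻¹ := by
  induction N generalizing c with
  | zero => simp [qPoch_zero]
  | succ N ih =>
    have step (m : ℕ) : q ^ ((m + 1) * (m + 1 + c)) / qPoch q q (m + 1 + c) +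
        q ^ m * (q ^ (m * (m + c)) / qPoch q q (m + c)) =
          q ^ (m * (m + (c + 1))) / qPoch q q (m + (c + 1)) := by
      have h := one_sub_pow_succ_ne_zero hq (m + c)
      rw [show m + 1 + c = m + c + 1 by ring, show m + (c + 1) = m + c + 1 by ring,
        qPoch_self_succ]
      field_simp
      ring
    apply mul_left_cancel₀ (one_sub_pow_succ_ne_zero hq N)
    rw [one_sub_pow_mul_sum_antidiagonal hq (fun m ↦ q ^ (m * (m + c)) / qPoch q q (m + c))]
    simp only [step, ih (c + 1)]
    have h := one_sub_pow_succ_ne_zero hq N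
    rw [qPoch_self_succ q N, show N + 1 + c = N + (c + 1) by ring]
    field_simp

/-- The general term `(-z)^r q^(r²)` of Jacobi's theta series. The exponent of `q` is a natural
number so that `q = 0` is allowed. -/
noncomputable def thetaTerm (q z : ℂ) (r : ℤ) : ℂ := (-z) ^ r * q ^ (r.natAbs ^ 2)

lemma thetaTerm_neg (q z : ℂ) (r : ℤ) : thetaTerm q z (-r) = thetaTerm q z⁻¹ r := by
  rw [thetaTerm, thetaTerm, Int.natAbs_neg, zpow_neg, ← inv_zpow, inv_neg]

lemma sum_antidiagonal_thetaTerm_symm (q z : ℂ) (a b : ℕ) :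
    ∑ p ∈ antidiagonal (a + b),
        thetaTerm q z (p.1 - b) / (qPoch (q ^ 2) (q ^ 2) p.1 * qPoch (q ^ 2) (q ^ 2) p.2) =
      ∑ p ∈ antidiagonal (b + a),
        thetaTerm q z⁻¹ (p.1 - a) / (qPoch (q ^ 2) (q ^ 2) p.1 * qPoch (q ^ 2) (q ^ 2) p.2) := by
  rw [← Nat.sum_antidiagonal_swap, add_comm b a]
  refine sum_congr rfl fun p hp ↦ ?_
  have h : ((p.2 : ℤ) - b) = -(p.1 - a) := by
    have := mem_antidiagonal.mp hp
    omega
  rw [Prod.fst_swap, Prod.snd_swap, h, thetaTerm_neg, mul_comm (qPoch _ _ p.2)]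

lemma one_sub_mul_sum_antidiagonal_thetaTerm {q z : ℂ} (hq : ¬IsOfFinOrder (q ^ 2)) (hz : z ≠ 0)
    (a b : ℕ) :
    (1 - (q ^ 2) ^ (a + b + 1)) * ∑ p ∈ antidiagonal (a + (b + 1)),
        thetaTerm q z (p.1 - (b + 1 : ℕ)) /
          (qPoch (q ^ 2) (q ^ 2) p.1 * qPoch (q ^ 2) (q ^ 2) p.2) =
      (1 - z⁻¹ * q * (q ^ 2) ^ b) * ∑ p ∈ antidiagonal (a + b),
        thetaTerm q z (p.1 - b) / (qPoch (q ^ 2) (q ^ 2) p.1 * qPoch (q ^ 2) (q ^ 2) p.2) := by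
  have step (i : ℕ) : thetaTerm q z ((i + 1 : ℕ) - (b + 1 : ℕ)) +
      (q ^ 2) ^ i * thetaTerm q z (i - (b + 1 : ℕ)) =
        (1 - z⁻¹ * q * (q ^ 2) ^ b) * thetaTerm q z (i - b) := by
    have exponent : 2 * i + ((i : ℤ) - (b + 1 : ℕ)).natAbs ^ 2 =
        2 * b + 1 + ((i : ℤ) - b).natAbs ^ 2 := by
      zify
      simp only [sq_abs]
      ring
    have shift : (q ^ 2) ^ i * thetaTerm q z (i - (b + 1 : ℕ)) =
        -(z⁻¹ * q * (q ^ 2) ^ b) * thetaTerm q z (i - b) := by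
      have hpow : q ^ (2 * i) * q ^ (((i : ℤ) - (b + 1 : ℕ)).natAbs ^ 2) =
          q ^ (2 * b + 1) * q ^ (((i : ℤ) - b).natAbs ^ 2) := by
        rw [← pow_add, exponent, pow_add]
      have hzpow : (-z) ^ ((i : ℤ) - (b + 1 : ℕ)) = (-z) ^ ((i : ℤ) - b) * (-z⁻¹) := by
        rw [← inv_neg, ← zpow_sub_one₀ (neg_ne_zero.mpr hz)]
        push_cast
        ring_nf
      rw [thetaTerm, thetaTerm, hzpow]
      linear_combination (-z) ^ ((i : ℤ) - b) * (-z⁻¹) * hpow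
    rw [shift, show ((i + 1 : ℕ) : ℤ) - (b + 1 : ℕ) = i - b by push_cast; ring]
    ring
  rw [← add_assoc,
    one_sub_pow_mul_sum_antidiagonal hq (fun i ↦ thetaTerm q z (i - (b + 1 : ℕ)))]
  simp only [step, mul_div_assoc, mul_sum]

theorem sum_antidiagonal_thetaTerm {q z : ℂ} (hq : ¬IsOfFinOrder (q ^ 2)) (hz : z ≠ 0)
    (a b : ℕ) :
    ∑ p ∈ antidiagonal (a + b),
        thetaTerm q z (p.1 - b) / (qPoch (q ^ 2) (q ^ 2) p.1 * qPoch (q ^ 2) (q ^ 2) p.2) =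
      qPoch (z * q) (q ^ 2) a * qPoch (z⁻¹ * q) (q ^ 2) b / qPoch (q ^ 2) (q ^ 2) (a + b) := by
  induction b with
  | zero =>
    rw [sum_antidiagonal_thetaTerm_symm]
    induction a with
    | zero => simp [qPoch_zero, thetaTerm]
    | succ a ih =>
      apply mul_left_cancel₀ (one_sub_pow_succ_ne_zero hq (0 + a))
      rw [one_sub_mul_sum_antidiagonal_thetaTerm hq (inv_ne_zero hz), ih]
      have h := one_sub_pow_succ_ne_zero hq a
      simp only [add_zero, zero_add, inv_inv, qPoch_self_succ (q ^ 2), qPoch_succ (z * q)]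
      field_simp
  | succ b ih =>
    have h := one_sub_pow_succ_ne_zero hq (a + b)
    apply mul_left_cancel₀ h
    rw [one_sub_mul_sum_antidiagonal_thetaTerm hq hz, ih, ← add_assoc, qPoch_self_succ,
      qPoch_succ]
    field_simp

end FiniteSums

section InverseSymbol

/-- The reciprocal `1 / (q; q)_k`, with the usual convention that it vanishes for `k < 0`; it
extends sums over `-n ≤ r ≤ n` to sums over all integers. -/
noncomputable def invQPoch (q : ℂ) (k : ℤ) : ℂ := if 0 ≤ k then (qPoch q q k.toNat)⁻¹ else 0

lemma invQPoch_natCast (q : ℂ) (n : ℕ) : invQPoch q n = (qPoch q q n)⁻¹ := by simp [invQPoch]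

lemma invQPoch_of_neg (q : ℂ) {k : ℤ} (hk : k < 0) : invQPoch q k = 0 := if_neg hk.not_ge

lemma sum_antidiagonal_eq_tsum_invQPoch (q : ℂ) (f : ℤ → ℂ) (a b : ℕ) :
    ∑ p ∈ antidiagonal (a + b), f (p.1 - b) / (qPoch q q p.1 * qPoch q q p.2) =
      ∑' r : ℤ, f r * invQPoch q (b + r) * invQPoch q (a - r) := by
  have inj : Set.InjOn (fun p : ℕ × ℕ ↦ (p.1 : ℤ) - b) (antidiagonal (a + b)) := by
    intro p hp p' hp' h
    simp only [mem_coe, HasAntidiagonal.mem_antidiagonal] at hp hp' h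
    ext <;> omega
  rw [tsum_eq_sum (s := (antidiagonal (a + b)).image fun p ↦ (p.1 : ℤ) - b), sum_image inj]
  · refine sum_congr rfl fun p hp ↦ ?_
    have h : (a : ℤ) - (p.1 - b) = p.2 := by
      have := mem_antidiagonal.mp hp
      omega
    rw [h, add_sub_cancel, invQPoch_natCast, invQPoch_natCast]
    ring
  · intro r hr
    by_cases hb : (b : ℤ) + r < 0
    · rw [invQPoch_of_neg q hb, mul_zero, zero_mul]
    · have ha : (a : ℤ) - r < 0 := by
        by_contra ha
        exact hr (mem_image.mpr
          ⟨((b + r).toNat, (a - r).toNat), mem_antidiagonal.mpr (by omega), by simp only; omega⟩)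
      rw [invQPoch_of_neg q ha, mul_zero]

end InverseSymbol

section InfiniteProducts

lemma not_isOfFinOrder_of_norm_lt_one {K : Type*} [NormedDivisionRing K] {q : K} (hq : ‖q‖ < 1) :
    ¬IsOfFinOrder q :=
  fun h ↦ hq.ne h.norm_eq_one

lemma norm_pow_lt_one {K : Type*} [NormedDivisionRing K] {q : K} (hq : ‖q‖ < 1) {n : ℕ}
    (hn : n ≠ 0) : ‖q ^ n‖ < 1 := by
  rw [norm_pow]
  exact pow_lt_one₀ (norm_nonneg q) hq hn

lemma summable_norm_neg_mul_pow (a : ℂ) {q : ℂ} (hq : ‖q‖ < 1) :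
    Summable fun h : ℕ ↦ ‖-(a * q ^ h)‖ := by
  simpa only [norm_neg, norm_mul, norm_pow] using
    (summable_geometric_of_lt_one (norm_nonneg q) hq).mul_left ‖a‖

lemma multipliable_one_sub_mul_pow (a : ℂ) {q : ℂ} (hq : ‖q‖ < 1) :
    Multipliable fun h : ℕ ↦ 1 - a * q ^ h := by
  simpa only [sub_eq_add_neg] using
    multipliable_one_add_of_summable (summable_norm_neg_mul_pow a hq)

lemma tendsto_qPoch (a : ℂ) {q : ℂ} (hq : ‖q‖ < 1) :
    Tendsto (qPoch a q) atTop (𝓝 (qPochInf a q)) :=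
  (multipliable_one_sub_mul_pow a hq).tendsto_prod_tprod_nat

lemma qPochInf_self_ne_zero {q : ℂ} (hq : ‖q‖ < 1) : qPochInf q q ≠ 0 := by
  have factor_ne_zero (h : ℕ) : 1 + -(q * q ^ h) ≠ 0 := by
    rw [← pow_succ', ← sub_eq_add_neg]
    exact one_sub_pow_succ_ne_zero (not_isOfFinOrder_of_norm_lt_one hq) h
  simpa only [qPochInf, sub_eq_add_neg] using
    tprod_one_add_ne_zero_of_summable factor_ne_zero (summable_norm_neg_mul_pow q hq)

lemma qPoch_mul_qPochInf (a : ℂ) {q : ℂ} (hq : ‖q‖ < 1) (n : ℕ) :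
    qPoch a q n * qPochInf (a * q ^ n) q = qPochInf a q := by
  have factor (h : ℕ) : 1 - a * q ^ (h + n) = 1 - a * q ^ n * q ^ h := by ring
  have tail : Multipliable fun h : ℕ ↦ 1 - a * q ^ (h + n) := by
    simpa only [factor] using multipliable_one_sub_mul_pow (a * q ^ n) hq
  simpa only [qPoch, qPochInf, factor] using
    tail.prod_mul_tprod_nat_mul' (f := fun h ↦ 1 - a * q ^ h)

lemma qPochInf_mul_qPochInf_neg (a : ℂ) {q : ℂ} (hq : ‖q‖ < 1) :
    qPochInf a q * qPochInf (-a) q = qPochInf (a ^ 2) (q ^ 2) := by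
  rw [qPochInf, qPochInf, ← (multipliable_one_sub_mul_pow a hq).tprod_mul
    (multipliable_one_sub_mul_pow (-a) hq)]
  exact tprod_congr fun h ↦ by ring

lemma qPochInf_mul_qPochInf_sq (a : ℂ) {q : ℂ} (hq : ‖q‖ < 1) :
    qPochInf a (q ^ 2) * qPochInf (a * q) (q ^ 2) = qPochInf a q := by
  have hq2 := norm_pow_lt_one hq two_ne_zero
  have even (h : ℕ) : 1 - a * q ^ (2 * h) = 1 - a * (q ^ 2) ^ h := by ring
  have odd (h : ℕ) : 1 - a * q ^ (2 * h + 1) = 1 - a * q * (q ^ 2) ^ h := by ring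
  have := tprod_even_mul_odd (f := fun h : ℕ ↦ 1 - a * q ^ h)
    (by simpa only [even] using multipliable_one_sub_mul_pow a hq2)
    (by simpa only [odd] using multipliable_one_sub_mul_pow (a * q) hq2)
  simpa only [qPochInf, even, odd] using this

end InfiniteProducts

section Limits

lemma tendsto_invQPoch {q : ℂ} (hq : ‖q‖ < 1) :
    Tendsto (invQPoch q) atTop (𝓝 (qPochInf q q)⁻¹) := by
  rw [← Nat.map_cast_int_atTop, tendsto_map'_iff]
  exact ((tendsto_qPoch q hq).inv₀ (qPochInf_self_ne_zero hq)).congr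
    fun n ↦ (invQPoch_natCast q n).symm

lemma tendsto_invQPoch_natCast_add {q : ℂ} (hq : ‖q‖ < 1) (k : ℤ) :
    Tendsto (fun n : ℕ ↦ invQPoch q (n + k)) atTop (𝓝 (qPochInf q q)⁻¹) :=
  (tendsto_invQPoch hq).comp (tendsto_atTop_add_const_right _ k tendsto_natCast_atTop_atTop)

lemma exists_norm_invQPoch_le {q : ℂ} (hq : ‖q‖ < 1) : ∃ C, ∀ k, ‖invQPoch q k‖ ≤ C := by
  obtain ⟨C, hC⟩ :=
    ((tendsto_invQPoch hq).comp tendsto_natCast_atTop_atTop).norm.bddAbove_range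
  have bound (n : ℕ) : ‖invQPoch q n‖ ≤ C := hC ⟨n, rfl⟩
  refine ⟨C, fun k ↦ ?_⟩
  rcases lt_or_ge k 0 with hk | hk
  · rw [invQPoch_of_neg q hk, norm_zero]
    exact (norm_nonneg _).trans (bound 0)
  · lift k to ℕ using hk
    exact bound k

lemma tendsto_tsum_mul_of_bounded {ι κ R : Type*} [NormedRing R] [CompleteSpace R] {w : ι → R}
    (hw : Summable (‖w ·‖)) {l : Filter κ} {φ : κ → ι → R} {C : ℝ} (hC : ∀ n i, ‖φ n i‖ ≤ C)
    {L : R} (hφ : ∀ i, Tendsto (φ · i) l (𝓝 L)) :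
    Tendsto (fun n ↦ ∑' i, w i * φ n i) l (𝓝 ((∑' i, w i) * L)) := by
  rw [← hw.of_norm.tsum_mul_right]
  refine tendsto_tsum_of_dominated_convergence (hw.mul_right C)
    (fun i ↦ (hφ i).const_mul (w i)) (.of_forall fun n i ↦ (norm_mul_le _ _).trans ?_)
  gcongr
  exact hC n i

lemma norm_pow_mul_add_le {q : ℂ} (hq : ‖q‖ < 1) (m c : ℕ) : ‖q ^ (m * (m + c))‖ ≤ ‖q‖ ^ m := by
  rw [norm_pow]
  exact pow_le_pow_of_le_one (norm_nonneg q) hq.le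
    ((Nat.le_mul_self m).trans (Nat.mul_le_mul_left m (Nat.le_add_right m c)))

lemma summable_pow_mul_add_mul_invQPoch {q : ℂ} (hq : ‖q‖ < 1) (c : ℕ) :
    Summable fun m : ℕ ↦ q ^ (m * (m + c)) * invQPoch q (m + c) * invQPoch q m := by
  obtain ⟨C, hC⟩ := exists_norm_invQPoch_le hq
  have C_nonneg : 0 ≤ C := (norm_nonneg _).trans (hC 0)
  refine .of_norm_bounded
    (((summable_geometric_of_lt_one (norm_nonneg q) hq).mul_right C).mul_right C) fun m ↦ ?_
  rw [norm_mul, norm_mul]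
  gcongr
  exacts [norm_pow_mul_add_le hq m c, hC _, hC _]

theorem tsum_pow_mul_add_mul_invQPoch {q : ℂ} (hq : ‖q‖ < 1) (c : ℕ) :
    ∑' m : ℕ, q ^ (m * (m + c)) * invQPoch q (m + c) * invQPoch q m = (qPochInf q q)⁻¹ := by
  obtain ⟨C, hC⟩ := exists_norm_invQPoch_le hq
  have vandermonde (N : ℕ) :
      ∑' m : ℕ, q ^ (m * (m + c)) * invQPoch q (m + c) * invQPoch q m * invQPoch q (N + -m) =
        invQPoch q N * invQPoch q (N + c) := by
    rw [← Nat.cast_add, invQPoch_natCast, invQPoch_natCast, ← mul_inv,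
      ← sum_antidiagonal_qVandermonde (not_isOfFinOrder_of_norm_lt_one hq) N c,
      Nat.sum_antidiagonal_eq_sum_range_succ fun i j ↦
        q ^ (i * (i + c)) / qPoch q q (i + c) / (qPoch q q i * qPoch q q j),
      tsum_eq_sum (s := range N.succ)]
    · refine sum_congr rfl fun m hm ↦ ?_
      have h : (N : ℤ) + -m = (N - m : ℕ) := by
        have := mem_range.mp hm
        omega
      rw [h, ← Nat.cast_add, invQPoch_natCast, invQPoch_natCast, invQPoch_natCast]
      ring
    · intro m hm
      have h : (N : ℤ) + -m < 0 := by
        rw [mem_range] at hm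
        omega
      rw [invQPoch_of_neg q h, mul_zero]
  have lim := tendsto_tsum_mul_of_bounded (summable_pow_mul_add_mul_invQPoch hq c).norm
    (fun (N m : ℕ) ↦ hC (N + -m)) fun m ↦ tendsto_invQPoch_natCast_add hq (-m)
  simp only [vandermonde] at lim
  have lim' := ((tendsto_invQPoch hq).comp tendsto_natCast_atTop_atTop).mul
    (tendsto_invQPoch_natCast_add hq c)
  exact mul_right_cancel₀ (inv_ne_zero (qPochInf_self_ne_zero hq)) (tendsto_nhds_unique lim lim')

lemma tsum_pow_sq_mul_invQPoch {q : ℂ} (hq : ‖q‖ < 1) (r : ℤ) :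
    ∑' n : ℕ, q ^ (n ^ 2) * (invQPoch q (n + r) * invQPoch q (n - r)) =
      q ^ (r.natAbs ^ 2) * (qPochInf q q)⁻¹ := by
  wlog hr : 0 ≤ r generalizing r
  · have := this (-r) (by omega)
    simpa only [← sub_eq_add_neg, sub_neg_eq_add, Int.natAbs_neg,
      mul_comm (invQPoch q (_ - _))] using this
  lift r to ℕ using hr
  rw [Int.natAbs_natCast, ← tsum_pow_mul_add_mul_invQPoch hq (2 * r), ← tsum_mul_left,
    ← (add_left_injective r).tsum_eq]
  · refine tsum_congr fun m ↦ ?_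
    push_cast
    rw [add_sub_cancel_right, add_assoc (m : ℤ), ← two_mul]
    ring
  · intro n hn
    rcases le_or_gt r n with h | h
    · exact ⟨n - r, Nat.sub_add_cancel h⟩
    · have h' : (n : ℤ) - r < 0 := by omega
      exact absurd (by simp only [invQPoch_of_neg q h', mul_zero]) hn

lemma summable_pow_sq_mul_mul_invQPoch {q : ℂ} (hq : ‖q‖ < 1) {α : ℤ → ℂ} (hα : Summable α) :
    Summable (Function.uncurry fun (n : ℕ) (r : ℤ) ↦
      q ^ (n ^ 2) * (α r * invQPoch q (n + r) * invQPoch q (n - r))) := by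
  obtain ⟨C, hC⟩ := exists_norm_invQPoch_le hq
  have C_nonneg : 0 ≤ C := (norm_nonneg _).trans (hC 0)
  have majorant : Summable fun p : ℕ × ℤ ↦ ‖q‖ ^ p.1 * (‖α p.2‖ * C * C) :=
    (summable_geometric_of_lt_one (norm_nonneg q) hq).mul_of_nonneg
      ((hα.norm.mul_right C).mul_right C) (fun _ ↦ by positivity) fun _ ↦ by positivity
  refine .of_norm_bounded majorant fun ⟨n, r⟩ ↦ ?_
  simp only [Function.uncurry_apply_pair, norm_mul]
  gcongr
  exacts [by simpa only [sq, add_zero] using norm_pow_mul_add_le hq n 0, hC _, hC _]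

end Limits

section BaileyPairs

/-- `(α, β)` is a Bailey pair relative to `1` in the base `q`, in bilateral form:
`β_n = ∑_{-n ≤ r ≤ n} α_r / ((q; q)_{n+r} (q; q)_{n-r})`. The restriction on `r` is enforced by
`invQPoch`, so that the series is a finite sum. -/
def IsBaileyPair (q : ℂ) (α : ℤ → ℂ) (β : ℕ → ℂ) : Prop :=
  ∀ n : ℕ, β n = ∑' r : ℤ, α r * invQPoch q (n + r) * invQPoch q (n - r)

namespace IsBaileyPair

variable {q : ℂ} {α : ℤ → ℂ} {β : ℕ → ℂ}

theorem tendsto (h : IsBaileyPair q α β) (hq : ‖q‖ < 1) (hα : Summable α) :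
    Tendsto β atTop (𝓝 ((∑' r, α r) / qPochInf q q ^ 2)) := by
  obtain ⟨C, hC⟩ := exists_norm_invQPoch_le hq
  have C_nonneg : 0 ≤ C := (norm_nonneg _).trans (hC 0)
  have bound (n : ℕ) (r : ℤ) : ‖invQPoch q (n + r) * invQPoch q (n - r)‖ ≤ C * C := by
    rw [norm_mul]
    gcongr <;> exact hC _
  rw [div_eq_mul_inv, ← inv_pow, sq]
  refine (tendsto_tsum_mul_of_bounded hα.norm bound fun r ↦ ?_).congr fun n ↦ ?_
  · exact (tendsto_invQPoch_natCast_add hq r).mul (tendsto_invQPoch_natCast_add hq (-r))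
  · simp only [h n, mul_assoc]

theorem tsum_pow_sq_mul (h : IsBaileyPair q α β) (hq : ‖q‖ < 1) (hα : Summable α) :
    ∑' n : ℕ, q ^ (n ^ 2) * β n = (∑' r : ℤ, q ^ (r.natAbs ^ 2) * α r) * (qPochInf q q)⁻¹ := by
  calc ∑' n : ℕ, q ^ (n ^ 2) * β n
      = ∑' (n : ℕ) (r : ℤ), q ^ (n ^ 2) * (α r * invQPoch q (n + r) * invQPoch q (n - r)) := by
        simp only [h _, tsum_mul_left]
    _ = ∑' (r : ℤ) (n : ℕ), q ^ (n ^ 2) * (α r * invQPoch q (n + r) * invQPoch q (n - r)) :=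
        (summable_pow_sq_mul_mul_invQPoch hq hα).tsum_comm.symm
    _ = ∑' r : ℤ, α r * ∑' n : ℕ, q ^ (n ^ 2) * (invQPoch q (n + r) * invQPoch q (n - r)) := by
        simp only [← tsum_mul_left, mul_assoc, mul_left_comm (α _)]
    _ = (∑' r : ℤ, q ^ (r.natAbs ^ 2) * α r) * (qPochInf q q)⁻¹ := by
        simp only [tsum_pow_sq_mul_invQPoch hq, ← tsum_mul_right, mul_left_comm (α _), mul_assoc,
          mul_comm (α _)]

end IsBaileyPair

end BaileyPairs

section TripleProduct

variable {q z : ℂ}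

theorem isBaileyPair_thetaTerm (hq : ¬IsOfFinOrder (q ^ 2)) (hz : z ≠ 0) :
    IsBaileyPair (q ^ 2) (thetaTerm q z) fun n ↦
      qPoch (z * q) (q ^ 2) n * qPoch (z⁻¹ * q) (q ^ 2) n / qPoch (q ^ 2) (q ^ 2) (2 * n) := by
  intro n
  rw [← sum_antidiagonal_eq_tsum_invQPoch, sum_antidiagonal_thetaTerm hq hz, ← two_mul]

lemma summable_thetaTerm_natCast (hq : ‖q‖ < 1) (z : ℂ) :
    Summable fun n : ℕ ↦ thetaTerm q z n := by
  have ratio_tendsto : Tendsto (fun n : ℕ ↦ ‖-z * q‖ * (‖q‖ ^ 2) ^ n) atTop (𝓝 0) := by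
    simpa only [mul_zero] using (tendsto_pow_atTop_nhds_zero_of_lt_one (sq_nonneg ‖q‖)
      (pow_lt_one₀ (norm_nonneg q) hq two_ne_zero)).const_mul ‖-z * q‖
  refine summable_of_ratio_norm_eventually_le one_half_lt_one ?_
  filter_upwards [ratio_tendsto.eventually_le_const one_half_pos] with n hn
  have ratio : thetaTerm q z (n + 1 : ℕ) = -z * q * (q ^ 2) ^ n * thetaTerm q z n := by
    simp only [thetaTerm, zpow_natCast, Int.natAbs_natCast]
    ring
  rw [ratio, norm_mul, norm_mul (-z * q), norm_pow, norm_pow]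
  gcongr

lemma summable_thetaTerm (hq : ‖q‖ < 1) (z : ℂ) : Summable (thetaTerm q z) :=
  .of_nat_of_neg (summable_thetaTerm_natCast hq z) <| by
    simpa only [thetaTerm_neg] using summable_thetaTerm_natCast hq z⁻¹

theorem tsum_thetaTerm (hq : ‖q‖ < 1) (hz : z ≠ 0) :
    ∑' r, thetaTerm q z r =
      qPochInf (z * q) (q ^ 2) * qPochInf (z⁻¹ * q) (q ^ 2) * qPochInf (q ^ 2) (q ^ 2) := by
  have hq2 := norm_pow_lt_one hq two_ne_zero
  have ne_zero := qPochInf_self_ne_zero hq2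
  have lim := (isBaileyPair_thetaTerm (not_isOfFinOrder_of_norm_lt_one hq2) hz).tendsto hq2
    (summable_thetaTerm hq z)
  have lim' := ((tendsto_qPoch (z * q) hq2).mul (tendsto_qPoch (z⁻¹ * q) hq2)).div
    ((tendsto_qPoch (q ^ 2) hq2).comp (tendsto_id.const_mul_atTop' two_pos)) ne_zero
  have limits_eq := tendsto_nhds_unique lim lim'
  rwa [sq, ← div_div, div_left_inj' ne_zero, div_eq_iff ne_zero] at limits_eq

theorem tsum_pow_mul_qPoch_mul_qPoch (hq : ‖q‖ < 1) (hz : z ≠ 0) :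
    ∑' n : ℕ, (q ^ 2) ^ (n ^ 2) *
        (qPoch (z * q) (q ^ 2) n * qPoch (z⁻¹ * q) (q ^ 2) n / qPoch (q ^ 2) (q ^ 2) (2 * n)) =
      qPochInf (z * q ^ 3) ((q ^ 3) ^ 2) * qPochInf (z⁻¹ * q ^ 3) ((q ^ 3) ^ 2) *
        qPochInf ((q ^ 3) ^ 2) ((q ^ 3) ^ 2) / qPochInf (q ^ 2) (q ^ 2) := by
  have hq2 := norm_pow_lt_one hq two_ne_zero
  have base_cubed (r : ℤ) : (q ^ 2) ^ (r.natAbs ^ 2) * thetaTerm q z r = thetaTerm (q ^ 3) z r := by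
    rw [thetaTerm, thetaTerm]
    ring
  rw [(isBaileyPair_thetaTerm (not_isOfFinOrder_of_norm_lt_one hq2) hz).tsum_pow_sq_mul hq2
    (summable_thetaTerm hq z)]
  simp only [base_cubed]
  rw [tsum_thetaTerm (norm_pow_lt_one hq three_ne_zero) hz, div_eq_mul_inv]

end TripleProduct

section ModulusSix

variable {q : ℂ}

lemma qPoch_mul_qPochInf_div_qPoch (hq : ‖q‖ < 1) (n : ℕ) :
    qPoch q (q ^ 2) n * qPochInf (-(q ^ (2 * n + 1))) q / qPoch (q ^ 2) (q ^ 2) n =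
      qPochInf (-q) q *
        (qPoch q (q ^ 2) n * qPoch q (q ^ 2) n / qPoch (q ^ 2) (q ^ 2) (2 * n)) := by
  have hq2 := not_isOfFinOrder_of_norm_lt_one (norm_pow_lt_one hq two_ne_zero)
  have factors_ne_zero := qPoch_self_ne_zero hq2 (2 * n)
  rw [qPoch_sq_two_mul, mul_ne_zero_iff, mul_ne_zero_iff] at factors_ne_zero
  obtain ⟨⟨_, _⟩, _⟩ := factors_ne_zero
  rw [← qPoch_mul_qPochInf (-q) hq (2 * n), qPoch_sq_two_mul, neg_mul, ← pow_succ']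
  field_simp

lemma qPochInf_neg_div_qPochInf_sq (hq : ‖q‖ < 1) :
    qPochInf (-q) q / qPochInf (q ^ 2) (q ^ 2) = (qPochInf q q)⁻¹ := by
  rw [div_eq_iff (qPochInf_self_ne_zero (norm_pow_lt_one hq two_ne_zero)),
    ← qPochInf_mul_qPochInf_neg q hq, inv_mul_cancel_left₀ (qPochInf_self_ne_zero hq)]

lemma tprod_mod6_eq_qPochInf (hq : ‖q‖ < 1) :
    ∏' j : ℕ, (1 - q ^ (3 * (j + 1))) * (1 - q ^ (6 * (j + 1) - 3)) / (1 - q ^ (j + 1)) =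
      qPochInf (q ^ 3) (q ^ 3) * qPochInf (q ^ 3) ((q ^ 3) ^ 2) / qPochInf q q := by
  have hq3 := norm_pow_lt_one hq three_ne_zero
  have m₁ := multipliable_one_sub_mul_pow (q ^ 3) hq3
  have m₂ := multipliable_one_sub_mul_pow (q ^ 3) (norm_pow_lt_one hq3 two_ne_zero)
  have m₃ := multipliable_one_sub_mul_pow q hq
  simp only [qPochInf]
  rw [← m₁.tprod_mul m₂, ← (m₁.mul m₂).tprod_div₀ m₃ (qPochInf_self_ne_zero hq)]
  refine tprod_congr fun j ↦ ?_
  rw [show 6 * (j + 1) - 3 = 6 * j + 3 by omega]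
  ring

end ModulusSix

/-- The third member of the modulus 6 family (McLaughlin's identity). -/
theorem mcLaughlin_mod6 (q : ℂ) (hq : ‖q‖ < 1) :
    ∑' j : ℕ, q ^ (2 * j ^ 2) * qPoch q (q ^ 2) j * qPochInf (-(q ^ (2 * j + 1))) q /
        qPoch (q ^ 2) (q ^ 2) j =
      ∏' j : ℕ, (1 - q ^ (3 * (j + 1))) * (1 - q ^ (6 * (j + 1) - 3)) / (1 - q ^ (j + 1)) := by
  have hq3 := norm_pow_lt_one hq three_ne_zero
  have bailey := tsum_pow_mul_qPoch_mul_qPoch hq one_ne_zero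
  simp only [inv_one, one_mul] at bailey
  have even_mul_odd : qPochInf (q ^ 3) ((q ^ 3) ^ 2) * qPochInf ((q ^ 3) ^ 2) ((q ^ 3) ^ 2) =
      qPochInf (q ^ 3) (q ^ 3) := by
    rw [← qPochInf_mul_qPochInf_sq (q ^ 3) hq3, ← sq (q ^ 3)]
  calc _ = ∑' j : ℕ, qPochInf (-q) q * ((q ^ 2) ^ (j ^ 2) *
        (qPoch q (q ^ 2) j * qPoch q (q ^ 2) j / qPoch (q ^ 2) (q ^ 2) (2 * j))) :=
        tsum_congr fun j ↦ by
          rw [mul_assoc, mul_div_assoc, qPoch_mul_qPochInf_div_qPoch hq, pow_mul, mul_left_comm]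
    _ = qPochInf (q ^ 3) ((q ^ 3) ^ 2) *
          (qPochInf (q ^ 3) ((q ^ 3) ^ 2) * qPochInf ((q ^ 3) ^ 2) ((q ^ 3) ^ 2)) *
          (qPochInf (-q) q / qPochInf (q ^ 2) (q ^ 2)) := by
        rw [tsum_mul_left, bailey]
        ring
    _ = _ := by
        rw [even_mul_odd, qPochInf_neg_div_qPochInf_sq hq, tprod_mod6_eq_qPochInf hq]
        ring
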